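/- arXiv:1901.06301 — 2 statements merged into one kernel-verified Lean document; each statement's English description precedes it below -/
import Mathlib

section
/- Let r be an even natural number. Then the sum of the dimensions over ℝ of the eigenspaces of Φ_sym for the eigenvalues 1 and −1 is at least (r−6)/6 if r ≡ 0 (mod 6), at least (r−2)/6 if r ≡ 2 (mod 6), and at least (r+2)/6 if r ≡ 4 (mod 6). -/
open MvPolynomial

/-- The substitution `(σ* f)(x,y) = f(x+y, y)` as a linear endomorphism of the
polynomial ring `ℝ[x,y]`. -/
noncomputable def sigmaStar : MvPolynomial (Fin 2) ℝ →ₗ[ℝ] MvPolynomial (Fin 2) ℝ :=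
  (aeval ![X 0 + X 1, X 1]).toLinearMap

/-- The substitution `(τ* f)(x,y) = f(x, x+y)` as a linear endomorphism of the
polynomial ring `ℝ[x,y]`. -/
noncomputable def tauStar : MvPolynomial (Fin 2) ℝ →ₗ[ℝ] MvPolynomial (Fin 2) ℝ :=
  (aeval ![X 0, X 0 + X 1]).toLinearMap

/-- The operator `Φ : f(x,y) ↦ f(x+y, y) + f(x, x+y)`.  It preserves the space of
homogeneous polynomials of each degree `r`. -/
noncomputable def Phi : MvPolynomial (Fin 2) ℝ →ₗ[ℝ] MvPolynomial (Fin 2) ℝ :=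
  sigmaStar + tauStar

/-- The swap substitution `f(x,y) ↦ f(y,x)` as a linear endomorphism. -/
noncomputable def swapStar : MvPolynomial (Fin 2) ℝ →ₗ[ℝ] MvPolynomial (Fin 2) ℝ :=
  (aeval ![X 1, X 0]).toLinearMap

/-- The space `V` of homogeneous polynomials of degree `r` in two variables. -/
noncomputable abbrev V (r : ℕ) : Submodule ℝ (MvPolynomial (Fin 2) ℝ) :=
  MvPolynomial.homogeneousSubmodule (Fin 2) ℝ r

/-- The subspace of `V` spanned by all polynomials of the form `f(x,y) - f(y,x)`. -/
noncomputable def K (r : ℕ) : Submodule ℝ ↥(V r) :=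
  Submodule.span ℝ
    {g : ↥(V r) | ∃ f : ↥(V r),
      (g : MvPolynomial (Fin 2) ℝ) = (f : MvPolynomial (Fin 2) ℝ) - swapStar f}


/-- exponent vector of `x^(r-j) y^j` -/
noncomputable def expo (r j : ℕ) : Fin 2 →₀ ℕ := Finsupp.single 0 (r - j) + Finsupp.single 1 j

lemma expo_zero (r j : ℕ) : expo r j 0 = r - j := by simp [expo]
lemma expo_one (r j : ℕ) : expo r j 1 = j := by simp [expo]

lemma deg_two (d : Fin 2 →₀ ℕ) : d.degree = d 0 + d 1 := by
  simp [Finsupp.degree_eq_sum]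

lemma hom_coeff_zero {r : ℕ} {f : MvPolynomial (Fin 2) ℝ} (hf : f.IsHomogeneous r)
    (d : Fin 2 →₀ ℕ) (hd : d 0 + d 1 ≠ r) : f.coeff d = 0 :=
  hf.coeff_eq_zero (by rw [deg_two]; exact hd)

lemma eq_expo {r : ℕ} (d : Fin 2 →₀ ℕ) (hd : d 0 + d 1 = r) : d = expo r (d 1) := by
  ext i
  fin_cases i
  · simp [expo]; omega
  · simp [expo]

lemma hom_expand {r : ℕ} {f : MvPolynomial (Fin 2) ℝ} (hf : f.IsHomogeneous r) :
    f = ∑ j ∈ Finset.range (r + 1), C (f.coeff (expo r j)) * (X 0 ^ (r - j) * X 1 ^ j) := by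
  have hm : ∀ j, C (f.coeff (expo r j)) * (X 0 ^ (r - j) * X 1 ^ j)
      = monomial (expo r j) (f.coeff (expo r j)) := by
    intro j
    rw [X_pow_eq_monomial, X_pow_eq_monomial, monomial_mul, C_mul_monomial, expo]
    simp
  ext d
  simp only [hm, coeff_sum, coeff_monomial]
  by_cases hd : d 0 + d 1 = r
  · rw [Finset.sum_eq_single (d 1)]
    · rw [← eq_expo d hd]; simp
    · intro j _ hj
      rw [if_neg]
      rintro rfl
      exact hj (expo_one r j).symm
    · intro h
      exact absurd (Finset.mem_range.2 (by omega)) h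
  · rw [hom_coeff_zero hf d hd]
    symm
    apply Finset.sum_eq_zero
    intro j hj
    rw [if_neg]
    rintro rfl
    rw [expo_zero, expo_one] at hd
    have := Finset.mem_range.1 hj
    omega

lemma ext_aeval {A : Type*} [CommRing A] [Algebra ℝ A] (f : MvPolynomial (Fin 2) ℝ)
    (v : Fin 2 → MvPolynomial (Fin 2) ℝ) (w u : Fin 2 → A)
    (h0 : aeval w (v 0) = u 0) (h1 : aeval w (v 1) = u 1) :
    aeval w (aeval v f) = aeval u f := by
  have : (aeval w : MvPolynomial (Fin 2) ℝ →ₐ[ℝ] A).comp (aeval v) = aeval u := by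
    apply MvPolynomial.algHom_ext
    intro i
    fin_cases i <;> simp [h0, h1]
  rw [← this]; rfl

lemma hom_neg {r : ℕ} (hr : Even r) {f : MvPolynomial (Fin 2) ℝ} (hf : f.IsHomogeneous r)
    (a b : MvPolynomial (Fin 2) ℝ) : aeval ![-a, -b] f = aeval ![a, b] f := by
  rw [hom_expand hf]
  simp only [map_sum, map_mul, map_pow, aeval_X, aeval_C]
  apply Finset.sum_congr rfl
  intro j hj
  have := Finset.mem_range.1 hj
  have e : (-1 : MvPolynomial (Fin 2) ℝ) ^ (r - j) * (-1) ^ j = 1 := by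
    rw [← pow_add, Nat.sub_add_cancel (by omega)]
    exact hr.neg_one_pow
  simp only [Matrix.cons_val_zero, Matrix.cons_val_one]
  rw [neg_pow a, neg_pow b]
  linear_combination (algebraMap ℝ (MvPolynomial (Fin 2) ℝ) (coeff (expo r j) f)) * a ^ (r-j) * b ^ j * e

/-- the change of coordinates `g(x+y, x-y)` -/
noncomputable def rot : MvPolynomial (Fin 2) ℝ →ₐ[ℝ] MvPolynomial (Fin 2) ℝ :=
  aeval ![X 0 + X 1, X 0 - X 1]

lemma hom_subst {r : ℕ} {f : MvPolynomial (Fin 2) ℝ} (hf : f.IsHomogeneous r)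
    {a b : MvPolynomial (Fin 2) ℝ} (ha : a.IsHomogeneous 1) (hb : b.IsHomogeneous 1) :
    (aeval ![a, b] f).IsHomogeneous r := by
  have := hf.aeval (φ := f) ![a, b] (n := 1) (by intro i; fin_cases i <;> simpa)
  simpa using this

lemma h_X (i : Fin 2) : (X i : MvPolynomial (Fin 2) ℝ).IsHomogeneous 1 := isHomogeneous_X _ _

lemma coeff_odd_zero {r : ℕ} {p : MvPolynomial (Fin 2) ℝ} (hp : p.IsHomogeneous r)
    (h : aeval ![X 0, -X 1] p = p) (j : ℕ) (hj : Odd j) : p.coeff (expo r j) = 0 := by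
  have key : ∀ (q : MvPolynomial (Fin 2) ℝ) (d : Fin 2 →₀ ℕ),
      coeff d (aeval ![X 0, -X 1] q : MvPolynomial (Fin 2) ℝ) = (-1) ^ (d 1) * coeff d q := by
    intro q d
    induction q using MvPolynomial.induction_on' with
    | monomial u a =>
      have : (aeval ![X 0, -X 1] (monomial u a) : MvPolynomial (Fin 2) ℝ)
          = monomial u ((-1) ^ (u 1) * a) := by
        rw [aeval_monomial, Finsupp.prod_fintype _ _ (by simp)]
        simp only [Fin.prod_univ_two, Matrix.cons_val_zero, Matrix.cons_val_one]
        rw [monomial_eq (a := (-1) ^ (u 1) * a), Finsupp.prod_fintype _ _ (by simp), neg_pow (X 1 : MvPolynomial (Fin 2) ℝ)]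
        simp only [Fin.prod_univ_two, algebraMap_eq, map_mul, map_pow, map_neg, map_one]
        ring
      rw [this, coeff_monomial, coeff_monomial]
      split_ifs with hh
      · rw [hh]
      · simp
    | add p q hp hq => rw [map_add, coeff_add, coeff_add, hp, hq]; ring
  have := key p (expo r j)
  rw [h, expo_one, hj.neg_one_pow] at this
  linarith

lemma vanish {r m : ℕ} (hm : r < 6 * m) {g : MvPolynomial (Fin 2) ℝ} (hg : g.IsHomogeneous r)
    (hs : aeval ![X 1, X 0] g = g) (hU : aeval ![X 1, -X 0 - X 1] g = g)
    (hc : ∀ i < m, (rot g).coeff (expo r (2 * i)) = 0) : g = 0 := by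
  have hgr : (rot g).IsHomogeneous r :=
    hom_subst hg ((h_X 0).add (h_X 1)) ((h_X 0).sub (h_X 1))
  have hodd : aeval ![X 0, -X 1] (rot g) = rot g := by
    conv_rhs => rw [← hs]
    unfold rot
    rw [ext_aeval g _ _ ![X 0 - X 1, X 0 + X 1] (by simp; ring) (by simp),
      ext_aeval g _ _ ![X 0 - X 1, X 0 + X 1] (by simp) (by simp)]
  have hall : ∀ j < 2 * m, (rot g).coeff (expo r j) = 0 := by
    intro j hj
    rcases Nat.even_or_odd' j with ⟨k, rfl | rfl⟩
    · exact hc k (by omega)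
    · exact coeff_odd_zero hgr hodd _ ⟨k, rfl⟩
  have hd1 : (X 1 : MvPolynomial (Fin 2) ℝ) ^ (2 * m) ∣ rot g := by
    rw [hom_expand hgr]
    apply Finset.dvd_sum
    intro j _
    by_cases hj : j < 2 * m
    · rw [hall j hj]; simp
    · exact Dvd.dvd.mul_left (Dvd.dvd.mul_left (pow_dvd_pow _ (by omega)) _) _
  have hback : aeval ![C (1/2) * (X 0 + X 1), C (1/2) * (X 0 - X 1)] (rot g) = g := by
    unfold rot
    have e : (C (1/2) : MvPolynomial (Fin 2) ℝ) * 2 = 1 := by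
      rw [show (2 : MvPolynomial (Fin 2) ℝ) = C 2 from (map_ofNat C 2).symm, ← C_mul]; norm_num
    rw [ext_aeval g _ _ X, aeval_X_left_apply]
    · simp only [Matrix.cons_val_zero, Matrix.cons_val_one, map_add, aeval_X]
      linear_combination X 0 * e
    · simp only [Matrix.cons_val_zero, Matrix.cons_val_one, map_sub, aeval_X]
      linear_combination X 1 * e
  have hd2 : (X 0 - X 1 : MvPolynomial (Fin 2) ℝ) ^ (2 * m) ∣ g := by
    have := map_dvd (aeval ![C (1/2) * (X 0 + X 1), C (1/2) * (X 0 - X 1)] :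
      MvPolynomial (Fin 2) ℝ →ₐ[ℝ] MvPolynomial (Fin 2) ℝ) hd1
    rw [hback, map_pow, aeval_X] at this
    change (C (1/2) * (X 0 - X 1)) ^ (2 * m) ∣ g at this
    rw [mul_pow] at this
    exact (Dvd.intro_left _ rfl).trans this
  have hd3 : (X 1 - (-X 0 - X 1) : MvPolynomial (Fin 2) ℝ) ^ (2 * m) ∣ g := by
    have := map_dvd (aeval ![X 1, -X 0 - X 1] :
      MvPolynomial (Fin 2) ℝ →ₐ[ℝ] MvPolynomial (Fin 2) ℝ) hd2
    rw [hU] at this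
    simpa using this
  have hd4 : ((-X 0 - X 1) - (-X 1 - (-X 0 - X 1)) : MvPolynomial (Fin 2) ℝ) ^ (2 * m) ∣ g := by
    have := map_dvd (aeval ![X 1, -X 0 - X 1] :
      MvPolynomial (Fin 2) ℝ →ₐ[ℝ] MvPolynomial (Fin 2) ℝ) hd3
    rw [hU] at this
    simpa using this
  let ev : MvPolynomial (Fin 2) ℝ →ₐ[ℝ] Polynomial ℝ := aeval ![Polynomial.X, 1]
  have e2 : (Polynomial.X - Polynomial.C 1 : Polynomial ℝ) ^ (2 * m) ∣ ev g := by
    have := map_dvd ev hd2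
    simpa [ev] using this
  have e3 : (Polynomial.X - Polynomial.C (-2) : Polynomial ℝ) ^ (2 * m) ∣ ev g := by
    have := map_dvd ev hd3
    rw [map_pow] at this
    convert this using 2
    simp [ev, Polynomial.C_ofNat]
    ring
  have e4 : (Polynomial.X - Polynomial.C (-1/2) : Polynomial ℝ) ^ (2 * m) ∣ ev g := by
    have := map_dvd ev hd4
    rw [map_pow] at this
    have h2 : ev ((-X 0 - X 1) - (-X 1 - (-X 0 - X 1)))
        = Polynomial.C (-2) * (Polynomial.X - Polynomial.C (-1/2)) := by
      rw [mul_sub, ← Polynomial.C_mul, show (-2 : ℝ) * (-1/2) = 1 by norm_num]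
      simp [ev, Polynomial.C_ofNat]
      ring
    rw [h2, mul_pow] at this
    exact (Dvd.intro_left _ rfl).trans this
  have cop : ∀ a b : ℝ, a ≠ b → IsCoprime ((Polynomial.X - Polynomial.C a : Polynomial ℝ) ^ (2 * m))
      ((Polynomial.X - Polynomial.C b : Polynomial ℝ) ^ (2 * m)) := by
    intro a b hab
    exact (Polynomial.isCoprime_X_sub_C_of_isUnit_sub (sub_ne_zero.2 hab).isUnit).pow
  have e5 := (cop 1 (-2) (by norm_num)).mul_dvd e2 e3
  have e6 := (IsCoprime.mul_left (cop 1 (-1/2) (by norm_num)) (cop (-2) (-1/2) (by norm_num))).mul_dvd e5 e4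
  have hev : ev g = ∑ j ∈ Finset.range (r + 1),
      Polynomial.C (g.coeff (expo r j)) * Polynomial.X ^ (r - j) := by
    conv_lhs => rw [hom_expand hg]
    simp [ev, map_sum]
  have hdeg : (ev g).natDegree ≤ r := by
    rw [hev]
    apply Polynomial.natDegree_sum_le_of_forall_le
    intro j _
    exact (Polynomial.natDegree_C_mul_X_pow_le _ _).trans (by omega)
  have hz : ev g = 0 := by
    by_contra hne
    have h1 := Polynomial.natDegree_le_of_dvd e6 hne
    have mo : ∀ a : ℝ, ((Polynomial.X - Polynomial.C a : Polynomial ℝ) ^ (2 * m)).Monic :=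
      fun a => (Polynomial.monic_X_sub_C a).pow _
    rw [((mo _).mul (mo _)).natDegree_mul (mo _), (mo _).natDegree_mul (mo _)] at h1
    simp only [Polynomial.natDegree_pow, Polynomial.natDegree_X_sub_C] at h1
    omega
  rw [hom_expand hg]
  apply Finset.sum_eq_zero
  intro j hj
  have hj' := Finset.mem_range.1 hj
  have : (ev g).coeff (r - j) = g.coeff (expo r j) := by
    rw [hev, Polynomial.finsetSum_coeff, Finset.sum_eq_single j]
    · simp
    · intro k hk hkj
      have := Finset.mem_range.1 hk
      rw [Polynomial.coeff_C_mul_X_pow, if_neg (by omega)]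
    · intro h; exact absurd hj h
  rw [← this, hz]; simp

/-- the sign substitution `f(-x,y)` -/
noncomputable def negStar : MvPolynomial (Fin 2) ℝ →ₗ[ℝ] MvPolynomial (Fin 2) ℝ :=
  (aeval ![-X 0, X 1]).toLinearMap

lemma phi_hom {r : ℕ} {f : MvPolynomial (Fin 2) ℝ} (hf : f.IsHomogeneous r) :
    (Phi f).IsHomogeneous r :=
  IsHomogeneous.add (hom_subst hf ((h_X 0).add (h_X 1)) (h_X 1))
    (hom_subst hf (h_X 0) ((h_X 0).add (h_X 1)))

lemma core {r m : ℕ} (hr : Even r) (hm : r < 6 * m) {f : MvPolynomial (Fin 2) ℝ}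
    (hf : f.IsHomogeneous r) (s : ℝ) (hs : s * s = 1)
    (hsw : swapStar f = f) (hn : negStar f = s • f)
    (hc : ∀ i < m, (rot (f + s • Phi f)).coeff (expo r (2 * i)) = 0) : f + s • Phi f = 0 := by
  have sw : ∀ a b : MvPolynomial (Fin 2) ℝ, aeval ![a, b] f = aeval ![b, a] f := by
    intro a b
    conv_lhs => rw [← hsw]
    exact ext_aeval f _ _ _ (by simp) (by simp)
  have ng : ∀ a b : MvPolynomial (Fin 2) ℝ, aeval ![-a, b] f = s • aeval ![a, b] f := by
    intro a b
    have := congrArg (aeval ![a, b] : MvPolynomial (Fin 2) ℝ →ₐ[ℝ] MvPolynomial (Fin 2) ℝ) hn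
    rw [map_smul] at this
    rw [← this]
    exact (ext_aeval f _ _ _ (by simp) (by simp)).symm
  have nn := fun a b => hom_neg hr hf a b
  have idf : aeval ![X 0, X 1] f = f := by
    conv_rhs => rw [← aeval_X_left_apply f]
    congr 2
    ext i; fin_cases i <;> rfl
  have hPhi : Phi f = aeval ![X 0 + X 1, X 1] f + aeval ![X 0, X 0 + X 1] f := rfl
  apply vanish hm (hf.add ((homogeneousSubmodule (Fin 2) ℝ r).smul_mem s (phi_hom hf))) _ _ hc
  · rw [hPhi]
    simp only [map_add, map_smul]
    rw [ext_aeval f _ _ ![X 1 + X 0, X 0] (by simp) (by simp),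
      ext_aeval f _ _ ![X 1, X 1 + X 0] (by simp) (by simp),
      sw (X 1) (X 0), idf, sw (X 1 + X 0) (X 0), sw (X 1) (X 1 + X 0), add_comm (X 1) (X 0),
      add_comm (aeval ![X 0, X 0 + X 1] f)]
  · rw [hPhi]
    simp only [map_add, map_smul]
    rw [ext_aeval f _ _ ![-X 0, -(X 0 + X 1)] (by simp) (by simp; ring),
      ext_aeval f _ _ ![X 1, -X 0] (by simp) (by simp),
      nn, sw (X 1) (-X 0), ng, idf, ← nn (X 1), ng,
      sw (X 1), show -(-X 0 - X 1) = (X 0 + X 1 : MvPolynomial (Fin 2) ℝ) by ring]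
    rw [smul_add, smul_add, smul_smul, hs, one_smul]
    abel

/-- symmetric forms with `f(-x,y) = s f(x,y)` -/
noncomputable def symPart (r : ℕ) (s : ℝ) : Submodule ℝ ↥(V r) :=
  LinearMap.ker ((swapStar - LinearMap.id).comp (V r).subtype) ⊓
    LinearMap.ker ((negStar - s • LinearMap.id).comp (V r).subtype)

lemma mem_symPart {r : ℕ} {s : ℝ} {f : ↥(V r)} : f ∈ symPart r s ↔
    swapStar (f : MvPolynomial (Fin 2) ℝ) = f ∧ negStar (f : MvPolynomial (Fin 2) ℝ) = s • (f : MvPolynomial (Fin 2) ℝ) := by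
  simp [symPart, sub_eq_zero]

instance finV (r : ℕ) : Module.Finite ℝ ↥(V r) :=
  Module.Finite.iff_fg.2 (homogeneousSubmodule_fg ..)

/-- symmetrized monomial -/
noncomputable def symMon (r j : ℕ) : MvPolynomial (Fin 2) ℝ :=
  X 0 ^ (r - j) * X 1 ^ j + X 0 ^ j * X 1 ^ (r - j)

lemma symMon_hom {r j : ℕ} (hj : j ≤ r) : (symMon r j).IsHomogeneous r := by
  apply IsHomogeneous.add
  · have := (isHomogeneous_X_pow (R := ℝ) (0 : Fin 2) (r - j)).mul (isHomogeneous_X_pow (R := ℝ) (1 : Fin 2) j)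
    rwa [Nat.sub_add_cancel hj] at this
  · have := (isHomogeneous_X_pow (R := ℝ) (0 : Fin 2) j).mul (isHomogeneous_X_pow (R := ℝ) (1 : Fin 2) (r - j))
    rwa [Nat.add_sub_cancel' hj] at this

lemma symMon_swap (r j : ℕ) : swapStar (symMon r j) = symMon r j := by
  simp only [swapStar, symMon, AlgHom.toLinearMap_apply, map_add, map_mul, map_pow, aeval_X,
    Matrix.cons_val_zero, Matrix.cons_val_one]
  ring

lemma symMon_neg {r j : ℕ} (hr : Even r) (hj : j ≤ r) :
    negStar (symMon r j) = ((-1 : ℝ) ^ j) • symMon r j := by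
  simp only [negStar, symMon, AlgHom.toLinearMap_apply, map_add, map_mul, map_pow, aeval_X,
    Matrix.cons_val_zero, Matrix.cons_val_one]
  rw [neg_pow (X 0 : MvPolynomial (Fin 2) ℝ) (r - j), neg_pow (X 0 : MvPolynomial (Fin 2) ℝ) j]
  have e : (-1 : MvPolynomial (Fin 2) ℝ) ^ (r - j) = (-1) ^ j := by
    rcases Nat.even_or_odd j with h | h
    · rw [h.neg_one_pow, (show Even (r - j) by grind).neg_one_pow]
    · rw [h.neg_one_pow, (show Odd (r - j) by grind).neg_one_pow]
  rw [e, smul_eq_C_mul, map_pow, map_neg, map_one]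
  ring

lemma coeff_symMon (r j k : ℕ) (hj : 2 * j ≤ r) (hk : 2 * k ≤ r) :
    (symMon r j).coeff (expo r k) =
      if j = k then (1 + if 2 * j = r then 1 else 0) else 0 := by
  have e : ∀ a b : ℕ, coeff (expo r k) (X 0 ^ a * X 1 ^ b : MvPolynomial (Fin 2) ℝ)
      = if a = r - k ∧ b = k then 1 else 0 := by
    intro a b
    rw [X_pow_eq_monomial, X_pow_eq_monomial, monomial_mul, coeff_monomial, one_mul]
    congr 1
    rw [eq_iff_iff, Finsupp.ext_iff]
    simp [Fin.forall_fin_two, expo]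
  rw [symMon, coeff_add, e, e]
  split_ifs <;> first | omega | norm_num

lemma symPart_dim {r n e : ℕ} (hr : Even r) (hn : ∀ i < n, 2 * (2 * i + e) ≤ r) :
    n ≤ Module.finrank ℝ ↥(symPart r ((-1) ^ e)) := by
  let v : Fin n → ↥(symPart r ((-1) ^ e)) := fun i =>
    ⟨⟨symMon r (2 * i + e), symMon_hom (by have := hn i i.2; omega)⟩, by
      rw [mem_symPart]
      refine ⟨symMon_swap _ _, ?_⟩
      have := symMon_neg (j := 2 * i + e) hr (by have := hn i i.2; omega)
      rw [pow_add, pow_mul] at this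
      simpa using this⟩
  have hv : LinearIndependent ℝ v := by
    refine (Fintype.linearIndependent_iff (R := ℝ) (M := ↥(symPart r ((-1) ^ e)))).2 ?_
    intro a ha k
    have h := congrArg (fun w : ↥(symPart r ((-1) ^ e)) =>
      coeff (expo r (2 * k + e)) (w : ↥(V r)).1) ha
    simp only [AddSubmonoidClass.coe_finsetSum, Submodule.coe_smul, coeff_sum, coeff_smul, v,
      Submodule.coe_zero, coeff_zero] at h
    rw [Finset.sum_eq_single k] at h
    · rw [coeff_symMon _ _ _ (hn k k.2) (hn k k.2), if_pos rfl, smul_eq_mul] at h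
      rcases mul_eq_zero.1 h with h | h
      · exact h
      · split_ifs at h <;> norm_num at h
    · intro i _ hik
      rw [coeff_symMon _ _ _ (hn i i.2) (hn k k.2), if_neg, smul_zero]
      intro h
      exact hik (Fin.ext (by omega))
    · simp
  simpa using hv.fintype_card_le_finrank

lemma K_anti {r : ℕ} {f : ↥(V r)} (hf : f ∈ K r) :
    swapStar (f : MvPolynomial (Fin 2) ℝ) = -(f : MvPolynomial (Fin 2) ℝ) := by
  have : K r ≤ LinearMap.ker ((swapStar + LinearMap.id).comp (V r).subtype) := by
    apply Submodule.span_le.2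
    rintro g ⟨f, hg⟩
    have h2 : swapStar (swapStar (f : MvPolynomial (Fin 2) ℝ)) = f := by
      conv_rhs => rw [← aeval_X_left_apply (f : MvPolynomial (Fin 2) ℝ)]
      exact ext_aeval _ _ _ _ (by simp) (by simp)
    simp [hg, h2]
  have := this hf
  simpa [add_eq_zero_iff_eq_neg] using this

lemma eig_dim {r n m e : ℕ} (hr : Even r) (hm : r < 6 * m) (hn : ∀ i < n, 2 * (2 * i + e) ≤ r)
    (PhiSym : (↥(V r) ⧸ K r) →ₗ[ℝ] (↥(V r) ⧸ K r))
    (hsym : ∀ f g : ↥(V r),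
      Phi (f : MvPolynomial (Fin 2) ℝ) = (g : MvPolynomial (Fin 2) ℝ) →
      PhiSym (Submodule.Quotient.mk f) = Submodule.Quotient.mk g) :
    n ≤ m + Module.finrank ℝ ↥(LinearMap.ker (PhiSym + ((-1 : ℝ) ^ e) • LinearMap.id)) := by
  set s : ℝ := (-1) ^ e with hs
  have hss : s * s = 1 := by rw [hs, ← pow_add, ← two_mul, pow_mul]; simp
  have hdim : n ≤ Module.finrank ℝ ↥(symPart r s) := symPart_dim hr hn
  let L : ↥(symPart r s) →ₗ[ℝ] (Fin m → ℝ) := LinearMap.pi fun i =>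
    (lcoeff ℝ (expo r (2 * (i : ℕ)))).comp (rot.toLinearMap.comp
      ((LinearMap.id + s • Phi).comp ((V r).subtype.comp (symPart r s).subtype)))
  have hker : ∀ f : ↥(symPart r s), L f = 0 →
      Phi ((f : ↥(V r)) : MvPolynomial (Fin 2) ℝ) = (((-s) • (f : ↥(V r)) : ↥(V r)) : MvPolynomial (Fin 2) ℝ) := by
    intro f hf
    obtain ⟨h1, h2⟩ := mem_symPart.1 f.2
    have := core hr hm (f : ↥(V r)).2 s hss h1 h2 (fun i hi => congrFun hf ⟨i, hi⟩)
    have h3 := congrArg (fun p => s • p) this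
    simp only [smul_add, smul_smul, hss, one_smul, smul_zero] at h3
    rw [Submodule.coe_smul, neg_smul]
    exact eq_neg_of_add_eq_zero_right h3
  have hmem : ∀ f : ↥(LinearMap.ker L), ((K r).mkQ.comp ((symPart r s).subtype.comp (LinearMap.ker L).subtype)) f
      ∈ LinearMap.ker (PhiSym + s • LinearMap.id) := by
    intro f
    have := hsym _ _ (hker f.1 f.2)
    rw [LinearMap.mem_ker]
    simp only [LinearMap.comp_apply, Submodule.subtype_apply, LinearMap.add_apply, Submodule.mkQ_apply, this,
      LinearMap.smul_apply, LinearMap.id_apply, Submodule.Quotient.mk_smul, neg_smul]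
    simp
  let J := LinearMap.codRestrict _ _ hmem
  have hJ : Function.Injective J := by
    intro f g hfg
    have h0 := congrArg Subtype.val hfg
    have h1 : ((f : ↥(symPart r s)) : ↥(V r)) - ((g : ↥(symPart r s)) : ↥(V r)) ∈ K r :=
      (Submodule.Quotient.eq _).1 h0
    have h2 := K_anti h1
    rw [Submodule.coe_sub, map_sub, (mem_symPart.1 f.1.2).1, (mem_symPart.1 g.1.2).1,
      self_eq_neg, sub_eq_zero] at h2
    exact Subtype.ext (Subtype.ext (Subtype.ext h2))
  have h1 := LinearMap.finrank_le_finrank_of_injective hJ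
  have h2 := LinearMap.finrank_range_add_finrank_ker (K := ℝ) (V := ↥(symPart r s)) (V₂ := Fin m → ℝ) L
  have h3 := Submodule.finrank_le (LinearMap.range L)
  rw [Module.finrank_fin_fun] at h3
  omega

/-- For even `r`, the sum of the dimensions of the eigenspaces of `Φ_sym` for the
eigenvalues `1` and `-1` is at least `(r-6)/6` if `r ≡ 0 (mod 6)`, at least `(r-2)/6`
if `r ≡ 2 (mod 6)`, and at least `(r+2)/6` if `r ≡ 4 (mod 6)`.  Here `Φ_sym` is the
operator induced by `Φ` on the quotient `V_sym = V / K`, characterized by the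
compatibility hypothesis `hsym`. -/
theorem dim_eig_PhiSym_sum (r : ℕ) (hr : Even r)
    (PhiSym : (↥(V r) ⧸ K r) →ₗ[ℝ] (↥(V r) ⧸ K r))
    (hsym : ∀ f g : ↥(V r),
      Phi (f : MvPolynomial (Fin 2) ℝ) = (g : MvPolynomial (Fin 2) ℝ) →
      PhiSym (Submodule.Quotient.mk f) = Submodule.Quotient.mk g) :
    (r % 6 = 0 → ((r : ℤ) - 6) / 6 ≤
      ((Module.finrank ℝ ↥(LinearMap.ker (PhiSym - LinearMap.id)) +
        Module.finrank ℝ ↥(LinearMap.ker (PhiSym + LinearMap.id)) : ℕ) : ℤ)) ∧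
    (r % 6 = 2 → ((r : ℤ) - 2) / 6 ≤
      ((Module.finrank ℝ ↥(LinearMap.ker (PhiSym - LinearMap.id)) +
        Module.finrank ℝ ↥(LinearMap.ker (PhiSym + LinearMap.id)) : ℕ) : ℤ)) ∧
    (r % 6 = 4 → ((r : ℤ) + 2) / 6 ≤
      ((Module.finrank ℝ ↥(LinearMap.ker (PhiSym - LinearMap.id)) +
        Module.finrank ℝ ↥(LinearMap.ker (PhiSym + LinearMap.id)) : ℕ) : ℤ)) := by
  have h0 := eig_dim (n := r / 4 + 1) (m := r / 6 + 1) (e := 0) hr (by omega)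
    (fun i hi => by omega) PhiSym hsym
  have h1 := eig_dim (n := (r + 2) / 4) (m := r / 6 + 1) (e := 1) hr (by omega)
    (fun i hi => by omega) PhiSym hsym
  rw [pow_zero, one_smul] at h0
  have hneg : PhiSym + ((-1 : ℝ) ^ 1) • LinearMap.id = PhiSym - LinearMap.id := by
    apply LinearMap.ext
    intro x
    simp only [LinearMap.add_apply, LinearMap.sub_apply, LinearMap.smul_apply, LinearMap.id_apply, pow_one]
    module
  rw [hneg] at h1
  obtain ⟨k, hk⟩ := hr
  refine ⟨fun h => ?_, fun h => ?_, fun h => ?_⟩ <;> omega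
end

section
/- Let r be an even natural number and set ℓ = (r+12)/3 if r ≡ 0 (mod 6), ℓ = (r+10)/3 if r ≡ 2 (mod 6), and ℓ = (r+8)/3 if r ≡ 4 (mod 6). Then there exist real numbers a_1, …, a_ℓ and a natural number N such that, for every homogeneous polynomial f of degree r in two real variables and every n ≥ N, S_n(f) = Σ_{j=1}^{ℓ} a_j S_{n−j}(f). The coefficients a_j depend only on r, not on f. -/
/-- The Stern array: `stern n k` is the entry `s(n,k)` of the Stern array,
with `s(1,1) = 1`, `s(1,k) = 0` for `k ≠ 1`, and
`s(n,2k) = s(n-1,k)`, `s(n,2k+1) = s(n-1,k) + s(n-1,k+1)`. -/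
def stern : ℕ → ℤ → ℕ
  | 0, _ => 0
  | 1, k => if k = 1 then 1 else 0
  | n + 2, k =>
    if k % 2 = 0 then stern (n + 1) (k / 2)
    else stern (n + 1) ((k - 1) / 2) + stern (n + 1) ((k + 1) / 2)

/-- For a polynomial `f` in two variables,
`S n f = ∑_{k=0}^{2^n - 1} f(s(n,k), s(n,k+1))`. -/
noncomputable def S (n : ℕ) (f : MvPolynomial (Fin 2) ℝ) : ℝ :=
  ∑ k ∈ Finset.range (2 ^ n),
    MvPolynomial.eval ![(stern n (k : ℤ) : ℝ), (stern n ((k : ℤ) + 1) : ℝ)] f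

namespace SternAux
open MvPolynomial

abbrev E := MvPolynomial (Fin 2) ℝ

/-- linear substitution -/
noncomputable def sub (a b c d : ℝ) : E →ₐ[ℝ] E :=
  aeval ![C a * X 0 + C b * X 1, C c * X 0 + C d * X 1]

/-- evaluation at a pair -/
noncomputable def ev (f : E) (x y : ℝ) : ℝ := eval ![x, y] f

lemma ev_add (f g : E) (x y : ℝ) : ev (f + g) x y = ev f x y + ev g x y := by simp [ev]
lemma ev_sub (f g : E) (x y : ℝ) : ev (f - g) x y = ev f x y - ev g x y := by simp [ev]
lemma ev_smul (c : ℝ) (g : E) (x y : ℝ) : ev (c • g) x y = c * ev g x y := by simp [ev]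

lemma ev_ext {f g : E} (h : ∀ x y, ev f x y = ev g x y) : f = g := by
  apply MvPolynomial.funext
  intro v
  have : v = ![v 0, v 1] := by ext i; fin_cases i <;> rfl
  rw [this]
  exact h _ _

lemma ev_subst (a b c d : ℝ) (f : E) (x y : ℝ) :
    ev (sub a b c d f) x y = ev f (a * x + b * y) (c * x + d * y) := by
  unfold ev sub
  rw [← MvPolynomial.coe_aeval_eq_eval, ← MvPolynomial.coe_aeval_eq_eval]
  simp only [RingHom.coe_coe]
  rw [← AlgHom.comp_apply, comp_aeval]
  congr 2
  ext i; fin_cases i <;> simp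

lemma sub_homog {r : ℕ} (a b c d : ℝ) {f : E} (hf : f.IsHomogeneous r) :
    (sub a b c d f).IsHomogeneous r := by
  have := hf.aeval (n := 1) (![C a * X 0 + C b * X 1, C c * X 0 + C d * X 1] : Fin 2 → E) (by
    intro i
    have h : ∀ (u : ℝ) (j : Fin 2), (C u * X j : E).IsHomogeneous 1 := fun u j => by
      simpa using (isHomogeneous_C (Fin 2) u).mul (isHomogeneous_X ℝ j)
    fin_cases i
    · exact (h _ _).add (h _ _)
    · exact (h _ _).add (h _ _))
  simpa [sub] using this

lemma deg_eq {r : ℕ} {f : E} (hf : f.IsHomogeneous r) {d : Fin 2 →₀ ℕ} (hd : d ∈ f.support) :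
    d 0 + d 1 = r := by
  have h := hf (mem_support_iff.1 hd)
  rw [Finsupp.weight_apply, Finsupp.sum_fintype _ _ (by simp)] at h
  simpa using h

lemma ev_hom {r : ℕ} {f : E} (hf : f.IsHomogeneous r) (c x y : ℝ) :
    ev f (c * x) (c * y) = c ^ r * ev f x y := by
  unfold ev
  rw [eval_eq', eval_eq', Finset.mul_sum]
  refine Finset.sum_congr rfl fun d hd => ?_
  rw [← deg_eq hf hd]
  simp only [Fin.prod_univ_two, Matrix.cons_val_zero, Matrix.cons_val_one]
  rw [mul_pow, mul_pow, pow_add]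
  ring

lemma ev_neg {r : ℕ} (hr : Even r) {f : E} (hf : f.IsHomogeneous r) (x y : ℝ) :
    ev f (-x) (-y) = ev f x y := by
  have := ev_hom hf (-1) x y
  rw [hr.neg_one_pow, one_mul] at this
  simpa using this

noncomputable def T : E →ₗ[ℝ] E := (sub 1 0 1 1).toLinearMap + (sub 1 1 0 1).toLinearMap
noncomputable def sw : E →ₗ[ℝ] E := (sub 0 1 1 0).toLinearMap
noncomputable def ep : E →ₗ[ℝ] E := (sub 1 0 0 (-1)).toLinearMap

lemma ev_T (f : E) (x y : ℝ) : ev (T f) x y = ev f x (x + y) + ev f (x + y) y := by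
  simp [T, ev_add, ev_subst]
lemma ev_sw (f : E) (x y : ℝ) : ev (sw f) x y = ev f y x := by
  simp [sw, ev_subst]
lemma ev_ep (f : E) (x y : ℝ) : ev (ep f) x y = ev f x (-y) := by
  simp [ep, ev_subst]

lemma sum_two (g : ℕ → ℝ) (m : ℕ) : ∑ k ∈ Finset.range (2 * m), g k =
    ∑ k ∈ Finset.range m, (g (2 * k) + g (2 * k + 1)) := by
  induction m with
  | zero => simp
  | succ m ih =>
    rw [show 2 * (m + 1) = 2 * m + 1 + 1 by ring, Finset.sum_range_succ, Finset.sum_range_succ, ih,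
      Finset.sum_range_succ]
    ring

lemma S_eq (n : ℕ) (f : E) : S n f = ∑ k ∈ Finset.range (2 ^ n),
    ev f (stern n (k : ℤ)) (stern n ((k : ℤ) + 1)) := rfl

lemma stern_even (n : ℕ) (k : ℤ) : stern (n + 2) (2 * k) = stern (n + 1) k := by
  simp [stern]
lemma stern_odd (n : ℕ) (k : ℤ) :
    stern (n + 2) (2 * k + 1) = stern (n + 1) k + stern (n + 1) (k + 1) := by
  rw [stern, if_neg (by omega)]
  congr 2 <;> omega

lemma S_succ (n : ℕ) (f : E) : S (n + 2) f = S (n + 1) (T f) := by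
  rw [S_eq, S_eq, pow_succ' 2 (n + 1), sum_two]
  refine Finset.sum_congr rfl fun k _ => ?_
  rw [ev_T]
  push_cast
  rw [show (2 * (k : ℤ) + 1 + 1) = 2 * ((k : ℤ) + 1) by ring, stern_even, stern_even, stern_odd]
  push_cast
  rfl

lemma S_iter (i n : ℕ) (f : E) : S (n + 1) ((T ^ i) f) = S (n + 1 + i) f := by
  induction i generalizing f with
  | zero => simp
  | succ i ih =>
    rw [pow_succ, Module.End.mul_apply, ih, show n + 1 + (i + 1) = n + i + 2 by ring, S_succ]
    congr 1; ring

lemma T_sw (f : E) : T (sw f) = sw (T f) := by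
  apply ev_ext; intro x y
  simp only [ev_T, ev_sw]
  rw [add_comm y x]; ring

lemma S_sw (n : ℕ) (f : E) : S (n + 1) (sw f) = S (n + 1) f := by
  induction n generalizing f with
  | zero => simp [S_eq, ev_sw, Finset.sum_range_succ, stern]; ring
  | succ n ih => rw [S_succ, T_sw, ih, S_succ]

noncomputable def SL (n : ℕ) : E →ₗ[ℝ] ℝ where
  toFun := S n
  map_add' f g := by simp [S_eq, ev_add, Finset.sum_add_distrib]
  map_smul' c f := by simp [S_eq, ev_smul, Finset.mul_sum]

/-- the invariants -/
noncomputable def W (r : ℕ) : Submodule ℝ E where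
  carrier := {f | f.IsHomogeneous r ∧ (∀ x y, ev f y x = ev f x y) ∧
    ∀ x y, ev f y (-x - y) = ev f x y}
  add_mem' := by
    rintro f g ⟨h1, h2, h3⟩ ⟨k1, k2, k3⟩
    refine ⟨h1.add k1, fun x y => ?_, fun x y => ?_⟩
    · simp only [ev_add, h2 x y, k2 x y]
    · simp only [ev_add, h3 x y, k3 x y]
  zero_mem' := ⟨isHomogeneous_zero _ _ _, by simp [ev], by simp [ev]⟩
  smul_mem' := by
    rintro c f ⟨h1, h2, h3⟩
    refine ⟨?_, fun x y => ?_, fun x y => ?_⟩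
    · exact (homogeneousSubmodule (Fin 2) ℝ r).smul_mem c h1
    · simp only [ev_smul, h2 x y]
    · simp only [ev_smul, h3 x y]

noncomputable def U (r : ℕ) : Submodule ℝ E := W r ⊔ (W r).map ep

/-- symmetric homogeneous -/
def Sy (r : ℕ) (f : E) : Prop := f.IsHomogeneous r ∧ (∀ x y, ev f y x = ev f x y)

lemma Q_mem {r : ℕ} (hr : Even r) {f : E} (hf : Sy r f) : T f + ep f ∈ W r := by
  obtain ⟨h, hs⟩ := hf
  have hn := ev_neg hr h
  refine ⟨((sub_homog _ _ _ _ h).add (sub_homog _ _ _ _ h)).add (sub_homog _ _ _ _ h), ?_, ?_⟩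
  · intro x y
    simp only [ev_add, ev_T, ev_ep]
    have := hn x (-y)
    rw [neg_neg] at this
    rw [hs (y + x) y, hs x (y + x), add_comm y x, ← hs y (-x), this]
    ring
  · intro x y
    simp only [ev_add, ev_T, ev_ep]
    have e1 : y + (-x - y) = -x := by ring
    have e2 : -x - y = -(x + y) := by ring
    have e3 := hn x (-y)
    rw [neg_neg] at e3
    rw [e1, e2, neg_neg, hn, hs (-x) y, e3, hs (x+y) y]
    ring

lemma Sy_ep {r : ℕ} (hr : Even r) {f : E} (hf : Sy r f) : Sy r (ep f) := by
  obtain ⟨h, hs⟩ := hf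
  refine ⟨sub_homog _ _ _ _ h, fun x y => ?_⟩
  have e3 := ev_neg hr h x (-y)
  rw [neg_neg] at e3
  rw [ev_ep, ev_ep, ← e3, hs]

lemma ep_ep (f : E) : ep (ep f) = f := by
  apply ev_ext; intro x y; simp [ev_ep]

lemma W_Sy {r : ℕ} {f : E} (hf : f ∈ W r) : Sy r f := ⟨hf.1, hf.2.1⟩

lemma T_ep_W {r : ℕ} (hr : Even r) {f : E} (hf : f ∈ W r) : T (ep f) = (2 : ℝ) • f := by
  obtain ⟨h, hs, h3⟩ := hf
  apply ev_ext; intro x y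
  simp only [ev_T, ev_ep, ev_smul]
  have e1 := h3 y x
  have e2 := ev_neg hr h (-x - y) y
  rw [show -(-x - y) = x + y by ring] at e2
  rw [show -(x+y) = -y - x by ring, e1, e2, hs y (-x - y), h3, hs x y]
  ring

lemma T_U {r : ℕ} (hr : Even r) {u : E} (hu : u ∈ U r) : T u ∈ U r := by
  obtain ⟨w, hw, v, hv, rfl⟩ := Submodule.mem_sup.1 hu
  obtain ⟨w', hw', rfl⟩ := hv
  rw [map_add, T_ep_W hr hw']
  refine add_mem ?_ (Submodule.mem_sup_left ((W r).smul_mem _ hw'))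
  rw [show T w = (T w + ep w) - ep w by abel]
  exact sub_mem (Submodule.mem_sup_left (Q_mem hr (W_Sy hw)))
    (Submodule.mem_sup_right ⟨w, hw, rfl⟩)

lemma TT_U {r : ℕ} (hr : Even r) {f : E} (hf : Sy r f) : T (T f) - f ∈ U r := by
  have h1 := T_U hr (u := T f + ep f) (Submodule.mem_sup_left (Q_mem hr hf))
  have h2 : T (ep f) + ep (ep f) ∈ U r := Submodule.mem_sup_left (Q_mem hr (Sy_ep hr hf))
  have := sub_mem h1 h2
  rw [ep_ep, map_add] at this
  convert this using 1
  abel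

/-- sample points -/
noncomputable def pt (c : Fin 6) (t : ℝ) : ℝ :=
  ![t, 1 / t, -1 - t, -1 / (1 + t), -1 - 1 / t, -t / (1 + t)] c

lemma pt_inj {c c' : Fin 6} {t t' : ℝ} (ht : 2 ≤ t) (ht' : 2 ≤ t') (h : pt c t = pt c' t') :
    c = c' ∧ t = t' := by
  have a1 : ∀ t : ℝ, 2 ≤ t → 0 < 1 / t ∧ 1 / t < 1 := fun t ht =>
    ⟨by positivity, by rw [div_lt_one (by linarith)]; linarith⟩
  have a2 : ∀ t : ℝ, 2 ≤ t → -1 / 2 < -1 / (1 + t) ∧ -1 / (1 + t) < 0 := fun t ht =>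
    ⟨by rw [div_lt_div_iff₀ (by norm_num) (by linarith)]; linarith,
      div_neg_of_neg_of_pos (by norm_num) (by linarith)⟩
  have a3 : ∀ t : ℝ, 2 ≤ t → -1 < -t / (1 + t) ∧ -t / (1 + t) < -1 / 2 := fun t ht =>
    ⟨by rw [lt_div_iff₀ (by linarith)]; linarith,
      by rw [div_lt_div_iff₀ (by linarith) (by norm_num)]; linarith⟩
  obtain ⟨b1, b2⟩ := a1 t ht
  obtain ⟨b3, b4⟩ := a2 t ht
  obtain ⟨b5, b6⟩ := a3 t ht
  obtain ⟨d1, d2⟩ := a1 t' ht'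
  obtain ⟨d3, d4⟩ := a2 t' ht'
  obtain ⟨d5, d6⟩ := a3 t' ht'
  have p1 : t ≠ 0 := by linarith
  have p2 : t' ≠ 0 := by linarith
  have p3 : 1 + t ≠ 0 := by linarith
  have p4 : 1 + t' ≠ 0 := by linarith
  fin_cases c <;> fin_cases c' <;> simp only [pt] at h <;> simp at h ⊢ <;>
    first
    | linarith
    | (exfalso; simp only [← one_div] at h; linarith)
    | (field_simp at h; linarith)


/-- dehomogenization -/
noncomputable def dh (f : E) : Polynomial ℝ := aeval ![1, Polynomial.X] f

lemma dh_eval (f : E) (t : ℝ) : (dh f).eval t = ev f 1 t := by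
  unfold dh ev
  rw [aeval_def, eval₂_eq', eval_eq', Polynomial.eval_finsetSum]
  simp [Fin.prod_univ_two]

lemma dh_deg {r : ℕ} {f : E} (hf : f.IsHomogeneous r) : (dh f).natDegree ≤ r := by
  unfold dh
  rw [aeval_def, eval₂_eq']
  refine Polynomial.natDegree_sum_le_of_forall_le _ _ fun d hd => ?_
  have := deg_eq hf hd
  simp only [Fin.prod_univ_two, Matrix.cons_val_zero, Matrix.cons_val_one, one_pow, one_mul]
  exact (Polynomial.natDegree_C_mul_X_pow_le _ _).trans (by omega)

lemma pt_vanish {r : ℕ} (hr : Even r) {f : E} (hf : f ∈ W r) (c : Fin 6) {t : ℝ} (ht : 2 ≤ t)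
    (h0 : ev f 1 t = 0) : ev f 1 (pt c t) = 0 := by
  obtain ⟨h, hs, h3⟩ := hf
  have key : ∀ x y : ℝ, x ≠ 0 → ev f x y = 0 → ev f 1 (y / x) = 0 := by
    intro x y hx hxy
    have := ev_hom h x 1 (y / x)
    rw [mul_one, mul_div_cancel₀ _ hx, hxy] at this
    rcases mul_eq_zero.1 this.symm with h | h
    · exact absurd h (pow_ne_zero _ hx)
    · exact h
  have s1 : ev f t 1 = 0 := by rw [hs, h0]
  have s2 : ev f t (-1 - t) = 0 := by rw [h3, h0]
  have s3 : ev f 1 (-t - 1) = 0 := by rw [h3, s1]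
  have s4 : ev f (-t - 1) 1 = 0 := by rw [hs, s3]
  have s5 : ev f (-1 - t) t = 0 := by rw [hs, s2]
  have p1 : t ≠ 0 := by linarith
  have p3 : 1 + t ≠ 0 := by linarith
  have p4 : -1 - t ≠ 0 := by linarith
  have p5 : -t - 1 ≠ 0 := by linarith
  fin_cases c <;> simp only [pt] <;> simp
  · exact h0
  · convert key _ _ p1 s1 using 2; field_simp
  · convert s3 using 2; ring
  · convert key _ _ p5 s4 using 2; rw [div_eq_div_iff p3 p5]; ring
  · convert key _ _ p1 s2 using 2; field_simp; ring
  · convert key _ _ p4 s5 using 2; rw [div_eq_div_iff p3 p4]; ring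

noncomputable def smp (r : ℕ) : W r →ₗ[ℝ] (Fin (r / 6 + 1) → ℝ) where
  toFun f i := ev f.1 1 ((i : ℕ) + 2)
  map_add' f g := by ext i; simp [ev_add]
  map_smul' c f := by ext i; simp [ev_smul]

lemma smp_inj {r : ℕ} (hr : Even r) : Function.Injective (smp r) := by
  rw [injective_iff_map_eq_zero]
  rintro ⟨f, hf⟩ h
  have hz : ∀ i : Fin (r / 6 + 1), ev f 1 ((i : ℕ) + 2) = 0 := fun i => congrFun h i
  have hd : dh f = 0 := by
    refine Polynomial.eq_zero_of_natDegree_lt_card_of_eval_eq_zero (dh f)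
      (ι := Fin 6 × Fin (r / 6 + 1)) (f := fun p => pt p.1 ((p.2 : ℕ) + 2)) ?_ ?_ ?_
    · rintro ⟨c, i⟩ ⟨c', i'⟩ hh
      have := pt_inj (by simp) (by simp) hh
      have h2 : ((i : ℕ) : ℝ) = ((i' : ℕ) : ℝ) := by linarith [this.2]
      rw [Prod.mk.injEq]
      exact ⟨this.1, Fin.ext (by exact_mod_cast h2)⟩
    · rintro ⟨c, i⟩
      rw [dh_eval]
      exact pt_vanish hr hf c (by simp) (hz i)
    · have := dh_deg hf.1
      simp only [Fintype.card_prod, Fintype.card_fin]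
      omega
  have h1 : ∀ t, ev f 1 t = 0 := fun t => by rw [← dh_eval, hd]; simp
  have h2 : X 0 * f = 0 := by
    apply ev_ext
    intro x y
    have e : ev (X 0 * f) x y = x * ev f x y := by simp [ev]
    rw [e]
    have e0 : ev 0 x y = 0 := by simp [ev]
    rw [e0]
    by_cases hx : x = 0
    · simp [hx]
    · have := ev_hom hf.1 x 1 (y / x)
      rw [mul_one, mul_div_cancel₀ _ hx, h1, mul_zero] at this
      rw [this, mul_zero]
  have h3 : f = 0 := (mul_eq_zero.1 h2).resolve_left (X_ne_zero 0)
  exact Subtype.ext h3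

lemma W_fin {r : ℕ} (hr : Even r) : Module.Finite ℝ (W r) :=
  Module.Finite.of_injective (smp r) (smp_inj hr)

lemma U_fin {r : ℕ} (hr : Even r) : Module.Finite ℝ (U r) := by
  have := W_fin hr
  unfold U
  infer_instance

lemma U_rank {r : ℕ} (hr : Even r) : Module.finrank ℝ (U r) ≤ 2 * (r / 6 + 1) := by
  have := W_fin hr
  have h1 := LinearMap.finrank_le_finrank_of_injective (smp_inj hr)
  rw [Module.finrank_fin_fun] at h1
  have h2 := Submodule.finrank_map_le ep (W r)
  have h3 := Submodule.finrank_add_le_finrank_add_finrank (W r) ((W r).map ep)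
  unfold U
  omega

lemma aeval_restr {r : ℕ} (hr : Even r) (p : Polynomial ℝ) (u : U r) :
    Polynomial.aeval T p (u : E) =
      ((Polynomial.aeval (T.restrict (fun _ hu => T_U hr hu : ∀ u ∈ U r, T u ∈ U r)) p u : U r) : E) := by
  rw [Polynomial.aeval_eq_sum_range, Polynomial.aeval_eq_sum_range]
  simp only [LinearMap.sum_apply, LinearMap.smul_apply, AddSubmonoidClass.coe_finsetSum,
    Submodule.coe_smul]
  refine Finset.sum_congr rfl fun i _ => ?_
  congr 1
  induction i with
  | zero => simp
  | succ i ih =>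
    rw [pow_succ', pow_succ', Module.End.mul_apply, Module.End.mul_apply, ih (by simp at *; omega)]
    rfl

lemma exists_poly {r : ℕ} (hr : Even r) : ∃ p : Polynomial ℝ, p.Monic ∧
    p.natDegree = 2 * (r / 6 + 1) + 2 ∧ ∀ f, Sy r f → Polynomial.aeval T p f = 0 := by
  have := U_fin hr
  set R := T.restrict (fun _ hu => T_U hr hu : ∀ u ∈ U r, T u ∈ U r) with hR
  have hm : R.charpoly.Monic := R.charpoly_monic
  have hq : (Polynomial.X ^ 2 - 1 : Polynomial ℝ).Monic := by
    simpa using Polynomial.monic_X_pow_sub_C (1 : ℝ) (two_ne_zero)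
  have hqd : (Polynomial.X ^ 2 - 1 : Polynomial ℝ).natDegree = 2 := by
    simpa using Polynomial.natDegree_X_pow_sub_C (n := 2) (r := (1 : ℝ))
  have hx : (Polynomial.X ^ (2 * (r / 6 + 1) - Module.finrank ℝ (U r)) : Polynomial ℝ).Monic :=
    Polynomial.monic_X_pow _
  refine ⟨Polynomial.X ^ (2 * (r / 6 + 1) - Module.finrank ℝ (U r)) *
    (R.charpoly * (Polynomial.X ^ 2 - 1)), hx.mul (hm.mul hq), ?_, ?_⟩
  · rw [hx.natDegree_mul (hm.mul hq), hm.natDegree_mul hq, hqd, R.charpoly_natDegree,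
      Polynomial.natDegree_X_pow]
    have := U_rank hr
    omega
  · intro f hf
    rw [map_mul, map_mul, Module.End.mul_apply, Module.End.mul_apply]
    have e : Polynomial.aeval T (Polynomial.X ^ 2 - 1 : Polynomial ℝ) f = T (T f) - f := by
      simp [pow_two]
    rw [e]
    have := aeval_restr hr R.charpoly ⟨_, TT_U hr hf⟩
    rw [← hR, R.aeval_self_charpoly] at this
    simp only at this
    rw [this]
    simp

lemma S_rec {p : Polynomial ℝ} {f : E} (h : Polynomial.aeval T p f = 0) (m : ℕ) :
    ∑ i ∈ Finset.range (p.natDegree + 1), p.coeff i * S (m + 1 + i) f = 0 := by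
  have h1 : SL (m + 1) (Polynomial.aeval T p f) = 0 := by rw [h, map_zero]
  rw [Polynomial.aeval_eq_sum_range, LinearMap.sum_apply, map_sum] at h1
  rw [← h1]
  refine Finset.sum_congr rfl fun i _ => ?_
  rw [LinearMap.smul_apply, map_smul, smul_eq_mul, ← S_iter]
  rfl

lemma sym_Sy {r : ℕ} {f : E} (hf : f.IsHomogeneous r) : Sy r (f + sw f) := by
  refine ⟨hf.add (sub_homog _ _ _ _ hf), fun x y => ?_⟩
  simp only [ev_add, ev_sw]
  ring

lemma S_sym (n : ℕ) (f : E) : S (n + 1) (f + sw f) = 2 * S (n + 1) f := by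
  have : S (n + 1) (f + sw f) = S (n + 1) f + S (n + 1) (sw f) := (SL (n + 1)).map_add f (sw f)
  rw [this, S_sw]; ring

end SternAux

/-- For even `r`, with `ℓ = (r+12)/3` if `r ≡ 0 (mod 6)`, `ℓ = (r+10)/3` if
`r ≡ 2 (mod 6)`, `ℓ = (r+8)/3` if `r ≡ 4 (mod 6)`, there exist reals `a_1, …, a_ℓ`
(depending only on `r`) and `N` such that for every homogeneous polynomial `f`
of degree `r` and every `n ≥ N`, `S n f = ∑_{j=1}^{ℓ} a_j S (n-j) f`. -/
theorem S_short_recurrence_even (r : ℕ) (hr : Even r) (ℓ : ℕ)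
    (hℓ : (r % 6 = 0 ∧ ℓ = (r + 12) / 3) ∨ (r % 6 = 2 ∧ ℓ = (r + 10) / 3) ∨
      (r % 6 = 4 ∧ ℓ = (r + 8) / 3)) :
    ∃ (a : ℕ → ℝ) (N : ℕ), ∀ f : MvPolynomial (Fin 2) ℝ, f.IsHomogeneous r →
      ∀ n : ℕ, N ≤ n → S n f = ∑ j ∈ Finset.Icc 1 ℓ, a j * S (n - j) f := by
  obtain ⟨p, hp, hd, h0⟩ := SternAux.exists_poly hr
  have hl : p.natDegree = ℓ := by omega
  refine ⟨fun j => - p.coeff (ℓ - j), ℓ + 1, fun f hf n hn => ?_⟩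
  obtain ⟨m, rfl⟩ : ∃ m, n = m + 1 + ℓ := ⟨n - 1 - ℓ, by omega⟩
  have h1 := SternAux.S_rec (h0 _ (SternAux.sym_Sy hf)) m
  have h2 : ∑ i ∈ Finset.range (ℓ + 1), p.coeff i * S (m + 1 + i) f = 0 := by
    rw [hl] at h1
    have : (2 : ℝ) * ∑ i ∈ Finset.range (ℓ + 1), p.coeff i * S (m + 1 + i) f = 0 := by
      rw [← h1, Finset.mul_sum]
      refine Finset.sum_congr rfl fun i _ => ?_
      rw [show m + 1 + i = m + i + 1 by ring, SternAux.S_sym]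
      ring
    linarith
  rw [Finset.sum_range_succ, ← hl, hp.coeff_natDegree, hl] at h2
  have h3 : ∑ j ∈ Finset.Icc 1 ℓ, (- p.coeff (ℓ - j)) * S (m + 1 + ℓ - j) f =
      - ∑ i ∈ Finset.range ℓ, p.coeff i * S (m + 1 + i) f := by
    rw [← Finset.sum_neg_distrib]
    refine Finset.sum_nbij' (fun j => ℓ - j) (fun i => ℓ - i) ?_ ?_ ?_ ?_ ?_
    · intro j hj; simp only [Finset.mem_Icc, Finset.mem_range] at *; omega
    · intro j hj; simp only [Finset.mem_Icc, Finset.mem_range] at *; omega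
    · intro j hj; simp only [Finset.mem_Icc] at *; omega
    · intro j hj; simp only [Finset.mem_range] at *; omega
    · intro j hj
      simp only [Finset.mem_Icc] at hj
      rw [show m + 1 + ℓ - j = m + 1 + (ℓ - j) by omega]
      ring
  rw [h3]
  linarith
end
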